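/- Let K ⊆ ℝ^d be a convex body and let ℓ = [0,1] ⊆ ℝ be a line segment. Then the 1-codimensional cylinder K × [0,1] ⊆ ℝ^d × ℝ satisfies coin(K × [0,1]) = 4·N_{1/2}(K). -/

import Mathlib

open Set Pointwise

section Defs

variable {V : Type*} [NormedAddCommGroup V] [NormedSpace ℝ V]

/-- A convex body: compact, convex, with nonempty interior. -/
def IsConvexBody (K : Set V) : Prop :=
  IsCompact K ∧ Convex ℝ K ∧ (interior K).Nonempty

/-- `K` can be covered by `m` homothets of ratio `lam`. -/
def CoversWith (K : Set V) (lam : ℝ) (m : ℕ) : Prop :=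
  ∃ t : Fin m → V, K ⊆ ⋃ i, (fun x => lam • x + t i) '' K

/-- The `m`-covering number `γ_m(K)`. -/
noncomputable def gammaC (m : ℕ) (K : Set V) : ℝ :=
  sInf {lam : ℝ | 0 < lam ∧ CoversWith K lam m}

/-- The covering index `coin(K)`. -/
noncomputable def coin (K : Set V) : ℝ :=
  sInf {r : ℝ | ∃ m : ℕ, 0 < m ∧ gammaC m K ≤ 1 / 2 ∧ r = (m : ℝ) / (1 - gammaC m K)}

/-- The weak covering index `wcoin(K)`. -/
noncomputable def wcoin (K : Set V) : ℝ :=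
  sInf {r : ℝ | ∃ m : ℕ, 0 < m ∧ gammaC m K < 1 ∧ r = (m : ℝ) / (1 - gammaC m K)}

/-- `N_λ(K)`: the least number of translates of `λ • K` needed to cover `K`. -/
noncomputable def covN (lam : ℝ) (K : Set V) : ℕ :=
  sInf {n : ℕ | CoversWith K lam n}

/-- A convex body is tightly covered if for every `0 < λ < 1` it contains `N_λ(K)`
points no two of which lie in a common homothet `λ • K + t`. -/
def TightlyCovered (K : Set V) : Prop :=
  ∀ lam : ℝ, 0 < lam → lam < 1 →
    ∃ p : Fin (covN lam K) → V, (∀ i, p i ∈ K) ∧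
      ∀ i j, i ≠ j → ∀ t : V,
        ¬(p i ∈ (fun x => lam • x + t) '' K ∧ p j ∈ (fun x => lam • x + t) '' K)

/-- The covering parameter `C(K)` of Swanepoel. -/
noncomputable def covParam (K : Set V) : ℝ :=
  sInf {r : ℝ | ∃ k : ℕ, ∃ lam : Fin k → ℝ, ∃ t : Fin k → V,
    (∀ i, 0 < lam i ∧ lam i < 1) ∧
    (K ⊆ ⋃ i, (fun x => lam i • x + t i) '' K) ∧
    r = ∑ i, 1 / (1 - lam i)}

/-- The (multiplicative) Banach–Mazur distance. -/
noncomputable def distBM {d : ℕ} (K L : Set (Fin d → ℝ)) : ℝ :=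
  sInf {δ : ℝ | 1 ≤ δ ∧ ∃ T : (Fin d → ℝ) ≃ₗ[ℝ] (Fin d → ℝ), ∃ a ∈ K, ∃ b ∈ L,
    (fun x => x - b) '' L ⊆ T '' ((fun x => x - a) '' K) ∧
    T '' ((fun x => x - a) '' K) ⊆ δ • ((fun x => x - b) '' L)}

end Defs

section Aux

variable {V : Type*} [NormedAddCommGroup V] [NormedSpace ℝ V]

theorem aux_fintype {ι : Type*} [Fintype ι] (K : Set V) (lam : ℝ) (t : ι → V)
    (h : K ⊆ ⋃ i, (fun x => lam • x + t i) '' K) : CoversWith K lam (Fintype.card ι) := by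
  refine ⟨fun j => t ((Fintype.equivFin ι).symm j), fun x hx => ?_⟩
  obtain ⟨i, hi⟩ := mem_iUnion.1 (h hx)
  refine mem_iUnion.2 ⟨Fintype.equivFin ι i, ?_⟩
  simpa using hi

theorem aux_mono {ι : Type*} (K : Set V) (hc : Convex ℝ K) {k0 : V} (hk0 : k0 ∈ K) {lam mu : ℝ}
    (hl : 0 < lam) (hlm : lam ≤ mu) (S : Set V) (t : ι → V)
    (h : S ⊆ ⋃ i, (fun x => lam • x + t i) '' K) :
    S ⊆ ⋃ i, (fun x => mu • x + (t i - (mu - lam) • k0)) '' K := by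
  have hm : 0 < mu := hl.trans_le hlm
  intro x hx
  obtain ⟨i, y, hy, rfl⟩ := mem_iUnion.1 (h hx)
  refine mem_iUnion.2 ⟨i, (lam / mu) • y + (1 - lam / mu) • k0, hc hy hk0 (by positivity) ?_ (by ring), ?_⟩
  · rw [sub_nonneg, div_le_one hm]; exact hlm
  · simp only [smul_add, smul_smul]
    rw [mul_div_cancel₀ _ hm.ne', mul_sub, mul_div_cancel₀ _ hm.ne', mul_one]
    abel

theorem aux_monoC (K : Set V) (hc : Convex ℝ K) (hne : K.Nonempty) {lam mu : ℝ}
    (hl : 0 < lam) (hlm : lam ≤ mu) {m : ℕ} (h : CoversWith K lam m) : CoversWith K mu m := by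
  obtain ⟨k0, hk0⟩ := hne
  obtain ⟨t, ht⟩ := h
  exact ⟨_, aux_mono K hc hk0 hl hlm K t ht⟩

theorem aux_exists (K : Set V) (hK : IsConvexBody K) : ∃ n, CoversWith K (1 / 2) n := by
  obtain ⟨hcomp, hc, k0, hk0⟩ := hK
  have hnh : ∀ x ∈ K, (fun y => (1 / 2 : ℝ) • y + (x - (1 / 2 : ℝ) • k0)) '' K ∈ nhds x := by
    intro x _
    have h1 : K ∈ nhds k0 := mem_interior_iff_mem_nhds.1 hk0
    have hcont : Filter.Tendsto (fun z : V => (2 : ℝ) • (z - (x - (1 / 2 : ℝ) • k0))) (nhds x) (nhds k0) := by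
      have : Continuous (fun z : V => (2 : ℝ) • (z - (x - (1 / 2 : ℝ) • k0))) := by fun_prop
      have h2 := this.tendsto x
      simpa [smul_smul] using h2
    filter_upwards [hcont h1] with z hz
    exact ⟨_, hz, by simp [smul_smul]⟩
  obtain ⟨T, hT, hcov⟩ := hcomp.elim_nhds_subcover _ hnh
  refine ⟨_, aux_fintype (ι := T) K (1 / 2) (fun x => (x : V) - (1 / 2 : ℝ) • k0) ?_⟩
  intro x hx
  obtain ⟨y, hy, hxy⟩ := mem_iUnion₂.1 (hcov hx)
  exact mem_iUnion.2 ⟨⟨y, hy⟩, hxy⟩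

theorem aux_closed [FiniteDimensional ℝ V] (K : Set V) (hK : IsCompact K) {m : ℕ}
    (h : ∀ lam : ℝ, 1 / 2 < lam → CoversWith K lam m) : CoversWith K (1 / 2) m := by
  have : ProperSpace V := FiniteDimensional.proper ℝ V
  obtain ⟨r, hr⟩ := hK.isBounded.exists_norm_le
  let l : ℕ → ℝ := fun k => 1 / 2 + 1 / ((k : ℝ) + 1)
  have hl : ∀ k, 1 / 2 < l k := fun k => by
    have : (0 : ℝ) < 1 / ((k : ℝ) + 1) := by positivity
    simp only [l]; linarith
  have hl2 : ∀ k, l k ≤ 2 := fun k => by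
    have : 1 / ((k : ℝ) + 1) ≤ 1 := by
      rw [div_le_one (by positivity)]; linarith [(Nat.cast_nonneg k : (0 : ℝ) ≤ k)]
    simp only [l]; linarith
  have key : ∀ k, ∃ t : Fin m → V, t ∈ Metric.closedBall (0 : Fin m → V) (3 * |r|) ∧
      ∀ x ∈ K, ∃ i, ∃ y ∈ K, l k • y + t i = x := by
    intro k
    obtain ⟨t, ht⟩ := h (l k) (hl k)
    refine ⟨fun i => if ‖t i‖ ≤ 3 * |r| then t i else 0, ?_, ?_⟩
    · rw [mem_closedBall_zero_iff, pi_norm_le_iff_of_nonneg (by positivity)]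
      intro i
      split_ifs with hi
      · exact hi
      · simp
    · intro x hx
      obtain ⟨i, y, hy, hxy⟩ := mem_iUnion.1 (ht hx)
      simp only at hxy
      refine ⟨i, y, hy, ?_⟩
      have : ‖t i‖ ≤ 3 * |r| := by
        have e : t i = x - l k • y := by rw [← hxy]; abel
        have h1 := norm_sub_le x (l k • y)
        rw [norm_smul, Real.norm_of_nonneg (by linarith [hl k])] at h1
        have h2 := (hr x hx).trans (le_abs_self r)
        have h3 := (hr y hy).trans (le_abs_self r)
        have h4 : l k * ‖y‖ ≤ 2 * |r| :=
          mul_le_mul (hl2 k) h3 (norm_nonneg _) (by norm_num)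
        rw [e]; linarith
      simp only [this, if_true]; exact hxy
  choose t htB ht using key
  obtain ⟨t0, -, hlim⟩ := (isCompact_closedBall (0 : Fin m → V) (3 * |r|)).ultrafilter_le_nhds
    ((Filter.hyperfilter ℕ).map t) (by
      rw [Filter.le_principal_iff]
      exact Filter.mem_map.2 (Filter.univ_mem' htB))
  have hlim' : Filter.Tendsto t (Filter.hyperfilter ℕ : Filter ℕ) (nhds t0) := hlim
  have hll : Filter.Tendsto l (Filter.hyperfilter ℕ : Filter ℕ) (nhds (1 / 2)) := by
    have : Filter.Tendsto l Filter.atTop (nhds (1 / 2 + 0)) :=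
      tendsto_const_nhds.add tendsto_one_div_add_atTop_nhds_zero_nat
    rw [add_zero] at this
    exact this.mono_left (Nat.hyperfilter_le_atTop)
  refine ⟨t0, fun x hx => ?_⟩
  have hex : ∃ i, ∀ᶠ k in (Filter.hyperfilter ℕ : Filter ℕ), ∃ y ∈ K, l k • y + t k i = x := by
    rw [← Ultrafilter.eventually_exists_iff]
    exact Filter.Eventually.of_forall (fun k => ht k x hx)
  obtain ⟨i, hi⟩ := hex
  have hti : Filter.Tendsto (fun k => t k i) (Filter.hyperfilter ℕ : Filter ℕ) (nhds (t0 i)) :=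
    (tendsto_pi_nhds.1 hlim') i
  have hz : Filter.Tendsto (fun k => (l k)⁻¹ • (x - t k i)) (Filter.hyperfilter ℕ : Filter ℕ)
      (nhds ((1 / 2 : ℝ)⁻¹ • (x - t0 i))) :=
    (hll.inv₀ (by norm_num)).smul (tendsto_const_nhds.sub hti)
  have hmem : (1 / 2 : ℝ)⁻¹ • (x - t0 i) ∈ K := by
    refine hK.isClosed.mem_of_tendsto hz ?_
    filter_upwards [hi] with k ⟨y, hy, hxy⟩
    have : (l k)⁻¹ • (x - t k i) = y := by
      rw [← hxy, add_sub_cancel_right, smul_smul, inv_mul_cancel₀ (by linarith [hl k]), one_smul]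
    rw [this]; exact hy
  exact mem_iUnion.2 ⟨i, _, hmem, by simp [smul_smul]⟩

theorem aux_count (K : Set V) (hc : Convex ℝ K) (hne : K.Nonempty) {lam : ℝ} (hl : 0 < lam)
    (hl2 : lam ≤ 1 / 2) {m : ℕ} (h : CoversWith (K ×ˢ Set.Icc (0 : ℝ) 1) lam m) :
    (covN (1 / 2 : ℝ) K : ℝ) ≤ m * lam := by
  classical
  obtain ⟨t, ht⟩ := h
  obtain ⟨k0, hk0⟩ := hne
  have hslice : ∀ s ∈ Set.Icc (0 : ℝ) 1,
      (covN (1 / 2 : ℝ) K) ≤ Fintype.card {i : Fin m // s ∈ Set.Icc (t i).2 ((t i).2 + lam)} := by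
    intro s hs
    apply Nat.sInf_le
    refine aux_fintype K (1 / 2) _ (aux_mono K hc hk0 hl hl2 K
      (fun i : {i : Fin m // s ∈ Set.Icc (t i).2 ((t i).2 + lam)} => (t i.1).1) ?_)
    intro x hx
    obtain ⟨i, ⟨y, u⟩, ⟨hy, hu⟩, hxy⟩ := mem_iUnion.1 (ht (show (x, s) ∈ _ from ⟨hx, hs⟩))
    have e1 : lam • y + (t i).1 = x := congrArg Prod.fst hxy
    have e2 : lam * u + (t i).2 = s := congrArg Prod.snd hxy
    simp only [Set.mem_Icc] at hu
    refine mem_iUnion.2 ⟨⟨i, ?_, ?_⟩, y, hy, e1⟩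
    · nlinarith [hu.1]
    · nlinarith [hu.2]
  have hint : ((covN (1 / 2 : ℝ) K : ℕ) : ENNReal) ≤ (m : ENNReal) * ENNReal.ofReal lam := by
    calc ((covN (1 / 2 : ℝ) K : ℕ) : ENNReal)
        = ∫⁻ _ in Set.Icc (0 : ℝ) 1, ((covN (1 / 2 : ℝ) K : ℕ) : ENNReal) := by simp
      _ ≤ ∫⁻ s in Set.Icc (0 : ℝ) 1,
            ∑ i : Fin m, (Set.Icc (t i).2 ((t i).2 + lam)).indicator (fun _ => (1 : ENNReal)) s := by
          refine MeasureTheory.setLIntegral_mono' measurableSet_Icc (fun s hs => ?_)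
          have h1 := hslice s hs
          rw [Fintype.card_subtype] at h1
          simp only [Set.indicator_apply, Finset.sum_boole]
          exact_mod_cast h1
      _ ≤ ∫⁻ s, ∑ i : Fin m, (Set.Icc (t i).2 ((t i).2 + lam)).indicator (fun _ => (1 : ENNReal)) s :=
          MeasureTheory.setLIntegral_le_lintegral _ _
      _ = (m : ENNReal) * ENNReal.ofReal lam := by
          rw [MeasureTheory.lintegral_finsetSum _
            (fun i _ => measurable_const.indicator measurableSet_Icc)]
          simp [MeasureTheory.lintegral_indicator measurableSet_Icc]
  have := ENNReal.toReal_mono (by finiteness) hint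
  simpa [ENNReal.toReal_ofReal hl.le] using this

theorem aux_gamma_nonneg (m : ℕ) (K : Set V) : 0 ≤ gammaC m K :=
  Real.sInf_nonneg (fun _ h => h.1.le)

theorem aux_gamma_covers (K : Set V) (hc : Convex ℝ K) (hne : K.Nonempty) {m : ℕ} (hm : 0 < m)
    {lam : ℝ} (hlt : gammaC m K < lam) : CoversWith K lam m := by
  have hn : {lam : ℝ | 0 < lam ∧ CoversWith K lam m}.Nonempty :=
    ⟨1, one_pos, fun _ => 0, fun x hx => mem_iUnion.2 ⟨⟨0, hm⟩, x, hx, by simp⟩⟩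
  obtain ⟨mu, ⟨h0, h1⟩, h2⟩ := exists_lt_of_csInf_lt hn hlt
  exact aux_monoC K hc hne h0 h2.le h1

end Aux

/-- covering index of a 1-codimensional cylinder. -/
theorem coin_cylinder (d : ℕ) (K : Set (Fin d → ℝ)) (hK : IsConvexBody K) :
    coin (K ×ˢ Set.Icc (0 : ℝ) 1) = 4 * (covN (1 / 2 : ℝ) K : ℝ) := by
  have hne : K.Nonempty := hK.2.2.mono interior_subset
  have hCc : Convex ℝ (K ×ˢ Set.Icc (0 : ℝ) 1) := hK.2.1.prod (convex_Icc 0 1)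
  have hCne : (K ×ˢ Set.Icc (0 : ℝ) 1).Nonempty := hne.prod ⟨0, by simp⟩
  have hCk : IsCompact (K ×ˢ Set.Icc (0 : ℝ) 1) := hK.1.prod isCompact_Icc
  have hN : CoversWith K (1 / 2) (covN (1 / 2 : ℝ) K) := Nat.sInf_mem (aux_exists K hK)
  set N := covN (1 / 2 : ℝ) K with hNdef
  have hNpos : 0 < N := by
    obtain ⟨t, ht⟩ := hN
    obtain ⟨x, hx⟩ := hne
    obtain ⟨i, -⟩ := mem_iUnion.1 (ht hx)
    exact i.pos
  have hcov : CoversWith (K ×ˢ Set.Icc (0 : ℝ) 1) (1 / 2) (N * 2) := by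
    obtain ⟨t, ht⟩ := hN
    have := aux_fintype (ι := Fin N × Fin 2) (K ×ˢ Set.Icc (0 : ℝ) 1) (1 / 2)
      (fun p => (t p.1, if p.2 = 0 then 0 else 1 / 2)) ?_
    · simpa using this
    · rintro ⟨x, s⟩ ⟨hx, hs⟩
      obtain ⟨i, y, hy, hxy⟩ := mem_iUnion.1 (ht hx)
      simp only [Set.mem_Icc] at hs
      rcases le_total s (1 / 2) with h | h
      · refine mem_iUnion.2 ⟨(i, 0), (y, 2 * s), ⟨hy, ?_, ?_⟩, Prod.ext hxy ?_⟩
        · simp only; linarith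
        · simp only; linarith
        · simp
      · refine mem_iUnion.2 ⟨(i, 1), (y, 2 * s - 1), ⟨hy, ?_, ?_⟩, Prod.ext hxy ?_⟩
        · simp only; linarith
        · simp only; linarith
        · simp; ring
  have hg : gammaC (N * 2) (K ×ˢ Set.Icc (0 : ℝ) 1) ≤ 1 / 2 :=
    csInf_le ⟨0, fun _ h => h.1.le⟩ ⟨by norm_num, hcov⟩
  have hlow : ∀ r ∈ {r : ℝ | ∃ m : ℕ, 0 < m ∧ gammaC m (K ×ˢ Set.Icc (0 : ℝ) 1) ≤ 1 / 2 ∧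
      r = (m : ℝ) / (1 - gammaC m (K ×ˢ Set.Icc (0 : ℝ) 1))}, 4 * (N : ℝ) ≤ r := by
    rintro r ⟨m, hm, hgm, rfl⟩
    have hg0 := aux_gamma_nonneg m (K ×ˢ Set.Icc (0 : ℝ) 1)
    have hcv : ∀ lam, gammaC m (K ×ˢ Set.Icc (0 : ℝ) 1) < lam →
        CoversWith (K ×ˢ Set.Icc (0 : ℝ) 1) lam m :=
      fun lam h => aux_gamma_covers _ hCc hCne hm h
    generalize gammaC m (K ×ˢ Set.Icc (0 : ℝ) 1) = g at *
    have hmpos : (0 : ℝ) < m := by exact_mod_cast hm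
    have hmain : (N : ℝ) ≤ m * g := by
      rcases hgm.lt_or_eq with hlt | heq
      · have : (N : ℝ) / m ≤ g := by
          refine le_of_forall_gt_imp_ge_of_dense (fun a ha => ?_)
          have h1 := aux_count K hK.2.1 hne (lam := min a (1 / 2))
            (by apply lt_min <;> linarith) (min_le_right _ _) (hcv _ (lt_min ha hlt))
          rw [div_le_iff₀ hmpos, mul_comm]
          exact h1.trans (mul_le_mul_of_nonneg_left (min_le_left _ _) hmpos.le)
        rw [div_le_iff₀ hmpos] at this
        linarith
      · subst heq
        exact aux_count K hK.2.1 hne (by norm_num) le_rfl (aux_closed _ hCk hcv)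
    rw [le_div_iff₀ (by linarith)]
    nlinarith [mul_nonneg hmpos.le (sq_nonneg (1 - 2 * g)),
      mul_le_mul_of_nonneg_right hmain (show 0 ≤ 1 - g by linarith)]
  have hmem : ((N * 2 : ℕ) : ℝ) / (1 - gammaC (N * 2) (K ×ˢ Set.Icc (0 : ℝ) 1)) ∈
      {r : ℝ | ∃ m : ℕ, 0 < m ∧ gammaC m (K ×ˢ Set.Icc (0 : ℝ) 1) ≤ 1 / 2 ∧
      r = (m : ℝ) / (1 - gammaC m (K ×ˢ Set.Icc (0 : ℝ) 1))} :=
    ⟨N * 2, by omega, hg, rfl⟩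
  apply le_antisymm
  · refine (csInf_le ⟨_, hlow⟩ hmem).trans ?_
    rw [div_le_iff₀ (by linarith)]
    push_cast
    have : (0 : ℝ) < N := by exact_mod_cast hNpos
    nlinarith
  · exact le_csInf ⟨_, hmem⟩ hlow
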